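/- Let $\mu,\nu$ be locally finite positive Borel measures on $\mathbb{R}^d$ with $[\mu,\nu]_{A_2} = \sup_I \langle\mu\rangle_I\langle\nu\rangle_I < \infty$. For $y>0$ define the kernel $K_y(t,s) := y^{\epsilon}/(y+|t-s|)^{d+\epsilon}$ where $\epsilon>0$ is fixed. Then the integral operator $\varphi \mapsto \int K_y(t,s)\varphi(t)\,d\mu(t)$ is bounded from $L^2(\mu)$ to $L^2(\nu)$ with norm at most $c\,[\mu,\nu]_{A_2}^{1/2}$, where $c$ depends only on $d$ and $\epsilon$ (and not on $y$). -/

import Mathlib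

open MeasureTheory Set
noncomputable section

/-- Points of `ℝ^d`. -/
abbrev Rd (d : ℕ) := Fin d → ℝ

/-- The (closed, axis-parallel) cube with lower-left corner `a` and side length `ℓ`. -/
def cube {d : ℕ} (a : Rd d) (ℓ : ℝ) : Set (Rd d) := {x | ∀ i, a i ≤ x i ∧ x i ≤ a i + ℓ}

/-- The Poisson-type kernel `K_y(t,s) = y^ε / (y + |t-s|)^{d+ε}`. -/
def poissonKer (d : ℕ) (ε y : ℝ) (t s : Rd d) : ℝ :=
  y ^ ε / (y + ‖t - s‖) ^ ((d : ℝ) + ε)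

/-!
The kernel is dominated by a geometric series of averages: with `r k = 2 ^ k * y`,
`K_y(t,s) ≤ 2^(d+ε) * ∑ k, 2^(-kε) * (r k)^(-d) * 1_{|t-s| ≤ r k}` (`poissonKer_le`, where a
single term already suffices). It is therefore enough to bound the averaging operators
`A_r g (s) = r^(-d) ∫_{|t-s| ≤ r} g dμ` from `L²(μ)` to `L²(ν)` uniformly in `r`, and to sum.

For one scale (`single_scale`), Cauchy-Schwarz gives
`(∫_{B(s,r)} g dμ)² ≤ μ(B(s,r)) ∫_{B(s,r)} g² dμ`. Integrate in `s` against `ν` and exchange the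
integrals: the factor in front of `g(t)²` is `∫_{B(t,r)} μ(B(s,r)) dν(s) ≤ μ(B(t,2r)) ν(B(t,2r))`,
which the `A₂` condition on the cube `B(t,2r)` (balls of the sup norm are cubes) bounds by
`B (4r)^(2d)`. The series is summed by Cauchy-Schwarz with weights `2^(-kε)`.
-/

/-- Cauchy-Schwarz against the constant function `1`. -/
lemma sq_lintegral_le {α : Type*} [MeasurableSpace α] (m : Measure α) {f : α → ENNReal}
    (hf : AEMeasurable f m) : (∫⁻ x, f x ∂m) ^ 2 ≤ m univ * ∫⁻ x, f x ^ 2 ∂m := by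
  have h := ENNReal.lintegral_mul_le_Lp_mul_Lq m Real.HolderConjugate.two_two
    (f := fun _ => 1) (g := f) aemeasurable_const hf
  simp only [Pi.mul_apply, one_mul, ENNReal.rpow_two, one_pow, lintegral_one] at h
  calc (∫⁻ x, f x ∂m) ^ 2
      ≤ (m univ ^ (1 / 2 : ℝ) * (∫⁻ x, f x ^ 2 ∂m) ^ (1 / 2 : ℝ)) ^ 2 := by gcongr
    _ = _ := by
      rw [mul_pow, ← ENNReal.rpow_two, ← ENNReal.rpow_two, ← ENNReal.rpow_mul,
        ← ENNReal.rpow_mul]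
      norm_num

lemma sq_tsum_le (w b : ℕ → ENNReal) :
    (∑' k, w k * b k) ^ 2 ≤ (∑' k, w k) * ∑' k, w k * b k ^ 2 := by
  have h := sq_lintegral_le (Measure.sum fun k : ℕ => w k • Measure.dirac k) (f := b)
    (measurable_of_countable b).aemeasurable
  simpa [lintegral_sum_measure, lintegral_smul_measure, lintegral_dirac,
    Measure.sum_apply] using h

lemma closedBall_eq_cube {d : ℕ} (x : Rd d) {r : ℝ} (hr : 0 ≤ r) :
    Metric.closedBall x r = cube (fun i => x i - r) (2 * r) := by
  ext z
  simp only [Metric.mem_closedBall, dist_pi_le_iff hr, cube, mem_ofPred_eq, Real.dist_eq, abs_le]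
  refine forall_congr' fun i => ?_
  constructor <;> rintro ⟨h1, h2⟩ <;> constructor <;> linarith

/-- The `A₂` condition for a ball of the sup norm, with the averages cleared of denominators. -/
lemma ball_bound {d : ℕ} {μ ν : Measure (Rd d)} {B : ℝ} (hB : 0 ≤ B)
    (H : ∀ (a : Rd d) (ℓ : ℝ), 0 < ℓ →
          (μ (cube a ℓ) / ENNReal.ofReal (ℓ ^ d)) * (ν (cube a ℓ) / ENNReal.ofReal (ℓ ^ d))
            ≤ ENNReal.ofReal B) (x : Rd d) {r : ℝ} (hr : 0 < r) :
    μ (Metric.closedBall x r) * ν (Metric.closedBall x r)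
      ≤ ENNReal.ofReal (B * ((2 * r) ^ d) ^ 2) := by
  rw [closedBall_eq_cube x hr.le]
  have h := H (fun i => x i - r) (2 * r) (by positivity)
  have hp : 0 < (2 * r) ^ d := by positivity
  have h0 : ENNReal.ofReal ((2 * r) ^ d) ≠ 0 := by simpa using hp
  have ht : ENNReal.ofReal ((2 * r) ^ d) ≠ ⊤ := ENNReal.ofReal_ne_top
  rw [ENNReal.ofReal_mul hB, ENNReal.ofReal_pow hp.le]
  generalize ENNReal.ofReal ((2 * r) ^ d) = L at *
  generalize μ _ = m at *
  generalize ν _ = n at *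
  calc m * n = (m / L * L) * (n / L * L) := by rw [ENNReal.div_mul_cancel h0 ht,
        ENNReal.div_mul_cancel h0 ht]
    _ = (m / L * (n / L)) * L ^ 2 := by ring
    _ ≤ _ := by gcongr

lemma measurableSet_near {d : ℕ} (r : ℝ) :
    MeasurableSet {p : Rd d × Rd d | p.2 ∈ Metric.closedBall p.1 r} :=
  have h : IsClosed {p : Rd d × Rd d | dist p.2 p.1 ≤ r} :=
    isClosed_le (by fun_prop) continuous_const
  h.measurableSet

lemma measurable_near {d : ℕ} (r : ℝ) {g : Rd d → ENNReal} (hg : Measurable g) :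
    Measurable fun p : Rd d × Rd d => (Metric.closedBall p.1 r).indicator g p.2 := by
  have : (fun p : Rd d × Rd d => (Metric.closedBall p.1 r).indicator g p.2)
      = {p : Rd d × Rd d | p.2 ∈ Metric.closedBall p.1 r}.indicator (fun p => g p.2) := by
    ext p; simp [indicator]
  rw [this]
  exact (hg.comp measurable_snd).indicator (measurableSet_near r)

lemma measurable_ball_lintegral {d : ℕ} (μ : Measure (Rd d)) [SFinite μ] (r : ℝ)
    {g : Rd d → ENNReal} (hg : Measurable g) :
    Measurable fun s => ∫⁻ t in Metric.closedBall s r, g t ∂μ := by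
  simp_rw [← lintegral_indicator Metric.isClosed_closedBall.measurableSet]
  exact (measurable_near r hg).lintegral_prod_right'

/-- The averaging operator at the single scale `r` is bounded from `L²(μ)` to `L²(ν)`. -/
lemma single_scale {d : ℕ} {μ ν : Measure (Rd d)} [SFinite μ] [SFinite ν] {B : ℝ} (hB : 0 ≤ B)
    (H : ∀ (a : Rd d) (ℓ : ℝ), 0 < ℓ →
          (μ (cube a ℓ) / ENNReal.ofReal (ℓ ^ d)) * (ν (cube a ℓ) / ENNReal.ofReal (ℓ ^ d))
            ≤ ENNReal.ofReal B) {r : ℝ} (hr : 0 < r) {g : Rd d → ENNReal} (hg : Measurable g) :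
    ∫⁻ s, (∫⁻ t in Metric.closedBall s r, g t ∂μ) ^ 2 ∂ν
      ≤ ENNReal.ofReal (B * ((4 * r) ^ d) ^ 2) * ∫⁻ t, g t ^ 2 ∂μ := by
  have hms : ∀ s : Rd d, MeasurableSet (Metric.closedBall s r) :=
    fun s => Metric.isClosed_closedBall.measurableSet
  have hμ : Measurable fun s : Rd d => μ (Metric.closedBall s r) := by
    simpa using measurable_ball_lintegral μ r (g := fun _ => 1) measurable_const
  calc ∫⁻ s, (∫⁻ t in Metric.closedBall s r, g t ∂μ) ^ 2 ∂ν
      ≤ ∫⁻ s, μ (Metric.closedBall s r) * ∫⁻ t in Metric.closedBall s r, g t ^ 2 ∂μ ∂ν := by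
        refine lintegral_mono fun s => ?_
        simpa using sq_lintegral_le (μ.restrict (Metric.closedBall s r)) hg.aemeasurable
    _ = ∫⁻ s, ∫⁻ t, μ (Metric.closedBall s r) *
          (Metric.closedBall s r).indicator (fun t => g t ^ 2) t ∂μ ∂ν := by
        refine lintegral_congr fun s => ?_
        rw [lintegral_const_mul _ ((hg.pow_const 2).indicator (hms s)),
          lintegral_indicator (hms s)]
    _ = ∫⁻ t, ∫⁻ s, μ (Metric.closedBall s r) *
          (Metric.closedBall s r).indicator (fun t => g t ^ 2) t ∂ν ∂μ := by
        refine lintegral_lintegral_swap (Measurable.aemeasurable ?_)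
        exact (hμ.comp measurable_fst).mul (measurable_near r (hg.pow_const 2))
    _ ≤ ∫⁻ t, ENNReal.ofReal (B * ((4 * r) ^ d) ^ 2) * g t ^ 2 ∂μ := by
        refine lintegral_mono fun t => ?_
        calc ∫⁻ s, μ (Metric.closedBall s r) *
              (Metric.closedBall s r).indicator (fun t => g t ^ 2) t ∂ν
            ≤ ∫⁻ s, (Metric.closedBall t (2 * r)).indicator
                (fun _ => μ (Metric.closedBall t (2 * r)) * g t ^ 2) s ∂ν := by
              refine lintegral_mono fun s => ?_
              by_cases h : t ∈ Metric.closedBall s r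
              · have h' : dist s t ≤ r := by rw [dist_comm]; exact h
                have hs : s ∈ Metric.closedBall t (2 * r) := by
                  rw [Metric.mem_closedBall]; linarith
                have hsub : Metric.closedBall s r ⊆ Metric.closedBall t (2 * r) :=
                  Metric.closedBall_subset_closedBall' (by linarith)
                rw [indicator_of_mem h, indicator_of_mem hs]
                gcongr
              · rw [indicator_of_notMem h]; simp
          _ = (μ (Metric.closedBall t (2 * r)) * ν (Metric.closedBall t (2 * r))) * g t ^ 2 := by
              rw [lintegral_indicator Metric.isClosed_closedBall.measurableSet,
                setLIntegral_const]
              ring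
          _ ≤ _ := by
              have := ball_bound hB H t (r := 2 * r) (by positivity)
              rw [show 2 * (2 * r) = 4 * r by ring] at this
              gcongr
    _ = _ := lintegral_const_mul _ (hg.pow_const 2)

/-- The kernel is controlled by the average over the smallest ball of radius `2 ^ k * y` around
`s` that contains `t`. -/
lemma poissonKer_le {d : ℕ} {ε y : ℝ} (hε : 0 < ε) (hy : 0 < y) (t s : Rd d) :
    ∃ k : ℕ, ‖t - s‖ ≤ 2 ^ k * y ∧
      poissonKer d ε y t s ≤ (2 : ℝ) ^ ((d : ℝ) + ε) * ((2 : ℝ) ^ (-ε)) ^ k *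
        ((2 ^ k * y) ^ d)⁻¹ := by
  classical
  have hex : ∃ k : ℕ, ‖t - s‖ ≤ 2 ^ k * y := by
    obtain ⟨k, hk⟩ := pow_unbounded_of_one_lt (‖t - s‖ / y) (one_lt_two (α := ℝ))
    exact ⟨k, ((div_lt_iff₀ hy).1 hk).le⟩
  refine ⟨Nat.find hex, Nat.find_spec hex, ?_⟩
  set k := Nat.find hex with hk
  have hlow : 2 ^ k * y / 2 ≤ y + ‖t - s‖ := by
    rcases Nat.eq_zero_or_pos k with h0 | h0
    · rw [h0]; have := norm_nonneg (t - s); norm_num; linarith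
    · have := Nat.find_min hex (m := k - 1) (by omega)
      have h2 : (2 : ℝ) ^ k = 2 ^ (k - 1) * 2 := by
        rw [← pow_succ]; congr 1; omega
      rw [h2]
      push Not at this
      nlinarith
  have hR : 0 < (2 : ℝ) ^ k * y := by positivity
  have hd : 0 < (d : ℝ) + ε := by positivity
  calc poissonKer d ε y t s ≤ y ^ ε / (2 ^ k * y / 2) ^ ((d : ℝ) + ε) := by
        unfold poissonKer
        gcongr
    _ = _ := by
        rw [Real.div_rpow hR.le (by norm_num), Real.rpow_add hR, Real.rpow_natCast,
          Real.mul_rpow (x := 2 ^ k) (z := ε) (by positivity) hy.le, ← Real.rpow_natCast 2 k,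
          ← Real.rpow_natCast _ k, ← Real.rpow_mul (by norm_num), ← Real.rpow_mul (by norm_num),
          neg_mul, Real.rpow_neg (by norm_num), mul_comm (k : ℝ) ε]
        have := Real.rpow_pos_of_pos hy ε
        field_simp

/-- The `L²` bound for the kernel acting on nonnegative functions. -/
lemma kernel_bound {d : ℕ} {μ ν : Measure (Rd d)} [SFinite μ] [SFinite ν] {B ε y : ℝ}
    (hB : 0 ≤ B) (hε : 0 < ε) (hy : 0 < y)
    (H : ∀ (a : Rd d) (ℓ : ℝ), 0 < ℓ →
          (μ (cube a ℓ) / ENNReal.ofReal (ℓ ^ d)) * (ν (cube a ℓ) / ENNReal.ofReal (ℓ ^ d))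
            ≤ ENNReal.ofReal B) {g : Rd d → ENNReal} (hg : Measurable g) :
    ∫⁻ s, (∫⁻ t, ENNReal.ofReal (poissonKer d ε y t s) * g t ∂μ) ^ 2 ∂ν
      ≤ (∑' k : ℕ, ENNReal.ofReal ((2 : ℝ) ^ ((d : ℝ) + ε) * ((2 : ℝ) ^ (-ε)) ^ k)) ^ 2 *
        ENNReal.ofReal (B * (4 ^ d) ^ 2) * ∫⁻ t, g t ^ 2 ∂μ := by
  set w : ℕ → ENNReal :=
    fun k => ENNReal.ofReal ((2 : ℝ) ^ ((d : ℝ) + ε) * ((2 : ℝ) ^ (-ε)) ^ k) with hw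
  set ρ : ℕ → ℝ := fun k => 2 ^ k * y with hρ
  have hρ0 : ∀ k, 0 < ρ k := fun k => by positivity
  set b : ℕ → Rd d → ENNReal := fun k s =>
    ENNReal.ofReal ((ρ k ^ d)⁻¹) * ∫⁻ t in Metric.closedBall s (ρ k), g t ∂μ with hb
  have hbm : ∀ k, Measurable (b k) := fun k => (measurable_ball_lintegral μ _ hg).const_mul _
  have hpt : ∀ s, ∫⁻ t, ENNReal.ofReal (poissonKer d ε y t s) * g t ∂μ ≤ ∑' k, w k * b k s := by
    intro s
    calc ∫⁻ t, ENNReal.ofReal (poissonKer d ε y t s) * g t ∂μ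
        ≤ ∫⁻ t, ∑' k, w k * ENNReal.ofReal ((ρ k ^ d)⁻¹) *
            (Metric.closedBall s (ρ k)).indicator g t ∂μ := by
          refine lintegral_mono fun t => ?_
          obtain ⟨k, hk, hle⟩ := poissonKer_le hε hy t s
          refine le_trans ?_ (ENNReal.le_tsum k)
          have : t ∈ Metric.closedBall s (ρ k) := by
            rw [Metric.mem_closedBall, dist_eq_norm]; exact hk
          rw [indicator_of_mem this, hw, ← ENNReal.ofReal_mul (by positivity)]
          gcongr
      _ = ∑' k, w k * b k s := by
          have hm := fun k => hg.indicator
            (Metric.isClosed_closedBall (x := s) (ε := ρ k)).measurableSet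
          rw [lintegral_tsum fun k => ((hm k).const_mul _).aemeasurable]
          refine tsum_congr fun k => ?_
          rw [lintegral_const_mul _ (hm k),
            lintegral_indicator Metric.isClosed_closedBall.measurableSet, mul_assoc]
  have hbk : ∀ k, ∫⁻ s, b k s ^ 2 ∂ν
      ≤ ENNReal.ofReal (B * (4 ^ d) ^ 2) * ∫⁻ t, g t ^ 2 ∂μ := by
    intro k
    have hpos : 0 < ρ k ^ d := pow_pos (hρ0 k) d
    calc ∫⁻ s, b k s ^ 2 ∂ν = ENNReal.ofReal ((ρ k ^ d)⁻¹) ^ 2 *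
          ∫⁻ s, (∫⁻ t in Metric.closedBall s (ρ k), g t ∂μ) ^ 2 ∂ν := by
          simp_rw [hb, mul_pow]
          exact lintegral_const_mul _ ((measurable_ball_lintegral μ _ hg).pow_const 2)
      _ ≤ ENNReal.ofReal ((ρ k ^ d)⁻¹) ^ 2 *
          (ENNReal.ofReal (B * ((4 * ρ k) ^ d) ^ 2) * ∫⁻ t, g t ^ 2 ∂μ) := by
          gcongr
          exact single_scale hB H (hρ0 k) hg
      _ = _ := by
          rw [← mul_assoc, ← ENNReal.ofReal_pow (by positivity),
            ← ENNReal.ofReal_mul (by positivity)]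
          congr 2
          rw [mul_pow 4]
          field_simp
  calc ∫⁻ s, (∫⁻ t, ENNReal.ofReal (poissonKer d ε y t s) * g t ∂μ) ^ 2 ∂ν
      ≤ ∫⁻ s, (∑' k, w k) * ∑' k, w k * b k s ^ 2 ∂ν := by
        refine lintegral_mono fun s => ?_
        exact (pow_le_pow_left₀ zero_le (hpt s) 2).trans (sq_tsum_le w fun k => b k s)
    _ = (∑' k, w k) * ∑' k, w k * ∫⁻ s, b k s ^ 2 ∂ν := by
        have hm := fun k => ((hbm k).pow_const 2).const_mul (w k)
        rw [lintegral_const_mul _ (Measurable.tsum hm),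
          lintegral_tsum fun k => (hm k).aemeasurable]
        congr 1
        exact tsum_congr fun k => lintegral_const_mul _ ((hbm k).pow_const 2)
    _ ≤ (∑' k, w k) * ∑' k, w k *
          (ENNReal.ofReal (B * (4 ^ d) ^ 2) * ∫⁻ t, g t ^ 2 ∂μ) := by
        gcongr with k
        exact hbk k
    _ = _ := by
        rw [ENNReal.tsum_mul_right]
        ring

/-- If `[μ,ν]_{A₂} ≤ B < ∞`, the integral operator `φ ↦ ∫ K_y(t,·) φ(t) dμ(t)` is bounded
from `L²(μ)` to `L²(ν)` with norm at most `c √B`, where `c = c(d,ε)` does not depend on `y`. -/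
theorem stmt3 {d : ℕ} (hd : 0 < d) (ε : ℝ) (hε : 0 < ε) :
    ∃ c : ℝ, 0 < c ∧
      ∀ (μ ν : Measure (Rd d)), IsLocallyFiniteMeasure μ → IsLocallyFiniteMeasure ν →
        ∀ B : ℝ, 0 ≤ B →
        (∀ (a : Rd d) (ℓ : ℝ), 0 < ℓ →
          (μ (cube a ℓ) / ENNReal.ofReal (ℓ ^ d)) * (ν (cube a ℓ) / ENNReal.ofReal (ℓ ^ d))
            ≤ ENNReal.ofReal B) →
        ∀ y : ℝ, 0 < y → ∀ φ : Rd d → ℝ, AEMeasurable φ μ →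
          eLpNorm (fun s => ∫ t, poissonKer d ε y t s * φ t ∂μ) 2 ν
            ≤ ENNReal.ofReal (c * Real.sqrt B) * eLpNorm φ 2 μ := by
  have hq0 : 0 < (2 : ℝ) ^ (-ε) := by positivity
  have hq1 : (2 : ℝ) ^ (-ε) < 1 := Real.rpow_lt_one_of_one_lt_of_neg one_lt_two (by linarith)
  have hsum : Summable fun k : ℕ => (2 : ℝ) ^ ((d : ℝ) + ε) * ((2 : ℝ) ^ (-ε)) ^ k :=
    (summable_geometric_of_lt_one hq0.le hq1).mul_left _
  set S : ℝ := ∑' k : ℕ, (2 : ℝ) ^ ((d : ℝ) + ε) * ((2 : ℝ) ^ (-ε)) ^ k with hS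
  have hSpos : 0 < S := hsum.tsum_pos (fun k => by positivity) 0 (by positivity)
  refine ⟨S * 4 ^ d, by positivity, ?_⟩
  intro μ ν _ _ B hB H y hy φ hφ
  set g : Rd d → ENNReal := fun t => ‖hφ.mk φ t‖ₑ with hg
  have hgm : Measurable g := hφ.measurable_mk.enorm
  have hae : ∀ᵐ t ∂μ, ‖φ t‖ₑ = g t := by
    filter_upwards [hφ.ae_eq_mk] with t ht
    rw [hg, ht]
  have hsq : ∀ {α : Type} [MeasurableSpace α] (m : Measure α) (f : α → ℝ),
      eLpNorm f 2 m = (∫⁻ x, ‖f x‖ₑ ^ 2 ∂m) ^ (1 / 2 : ℝ) := by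
    intro α _ m f
    rw [eLpNorm_eq_lintegral_rpow_enorm_toReal (by norm_num) (by norm_num)]
    simp
  have key : ∫⁻ s, ‖∫ t, poissonKer d ε y t s * φ t ∂μ‖ₑ ^ 2 ∂ν
      ≤ ENNReal.ofReal (S * 4 ^ d * Real.sqrt B) ^ 2 * ∫⁻ t, ‖φ t‖ₑ ^ 2 ∂μ := by
    calc ∫⁻ s, ‖∫ t, poissonKer d ε y t s * φ t ∂μ‖ₑ ^ 2 ∂ν
        ≤ ∫⁻ s, (∫⁻ t, ENNReal.ofReal (poissonKer d ε y t s) * g t ∂μ) ^ 2 ∂ν := by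
          refine lintegral_mono fun s => pow_le_pow_left₀ zero_le ?_ 2
          refine (enorm_integral_le_lintegral_enorm _).trans_eq (lintegral_congr_ae ?_)
          filter_upwards [hae] with t ht
          have hK : 0 ≤ poissonKer d ε y t s := by unfold poissonKer; positivity
          rw [enorm_mul, ht, Real.enorm_of_nonneg hK]
      _ ≤ _ := kernel_bound hB hε hy H hgm
      _ = _ := by
          rw [← ENNReal.ofReal_tsum_of_nonneg (fun k => by positivity) hsum,
            ← ENNReal.ofReal_pow hSpos.le, ← ENNReal.ofReal_mul (by positivity),
            ← ENNReal.ofReal_pow (by positivity)]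
          congr 1
          · congr 1
            rw [mul_pow, mul_pow, Real.sq_sqrt hB]
            ring
          · refine lintegral_congr_ae ?_
            filter_upwards [hae] with t ht
            rw [ht]
  rw [hsq, hsq]
  calc _ ≤ (ENNReal.ofReal (S * 4 ^ d * Real.sqrt B) ^ 2 * ∫⁻ t, ‖φ t‖ₑ ^ 2 ∂μ) ^ (1 / 2 : ℝ) := by
        gcongr
    _ = _ := by
        rw [ENNReal.mul_rpow_of_nonneg _ _ (by norm_num), ← ENNReal.rpow_two, ← ENNReal.rpow_mul]
        norm_num
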